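/- Let (Q,I) be a gentle bound quiver with marked ribbon graph (G,≤) = △(Q,I). The following are equivalent: (1) (Q,I) satisfies the multi-clock condition; (2) there exists a pair of string functions S,T for (Q,I) with S ≡ −T; (3) the underlying graph of G is bipartite (there is a 2-coloring of its vertices such that the two endpoints of every edge receive different colors). -/

import Mathlib

set_option autoImplicit false

attribute [local instance] Classical.propDecidable

/-- A bound-quiver datum: a quiver (source and target maps on a set of arrows) together
with a set of length-two relations; `rel a b` means that the length-two path `ab`
(composable, i.e. `src a = tgt b`; paths are written from right to left) lies in the
generating set of relations of the ideal `I`. -/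
structure BQuiv (V A : Type) where
  src : A → V
  tgt : A → V
  rel : A → A → Prop

namespace BQuiv

variable {V A : Type}

/-- `l` is (the list of arrows of) a path of the quiver, written from right to left:
`l = [a₁, a₂, …, a_ℓ]` represents `a₁a₂⋯a_ℓ` and we ask `src aₜ = tgt aₜ₊₁`. -/
def PathChain (Q : BQuiv V A) (l : List A) : Prop :=
  l.Chain' (fun a b => Q.src a = Q.tgt b)

/-- The degree of a vertex: the number of outgoing plus the number of incoming arrows. -/
noncomputable def deg (Q : BQuiv V A) (v : V) : ℕ :=
  Nat.card {a : A // Q.src a = v} + Nat.card {a : A // Q.tgt a = v}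

/-- `(Q, I)` is a gentle bound quiver. -/
structure IsGentle (Q : BQuiv V A) : Prop where
  /-- relations are composable length-two paths -/
  rel_comp : ∀ a b, Q.rel a b → Q.src a = Q.tgt b
  /-- at most two outgoing arrows at every vertex -/
  out_le : ∀ v, Nat.card {a : A // Q.src a = v} ≤ 2
  /-- at most two incoming arrows at every vertex -/
  in_le : ∀ v, Nat.card {a : A // Q.tgt a = v} ≤ 2
  /-- for every arrow `b` there is at most one arrow `a` with `ab ∉ I` -/
  unique_nonrel_post : ∀ b a a', Q.src a = Q.tgt b → Q.src a' = Q.tgt b →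
    ¬ Q.rel a b → ¬ Q.rel a' b → a = a'
  /-- for every arrow `b` there is at most one arrow `c` with `bc ∉ I` -/
  unique_nonrel_pre : ∀ b c c', Q.src b = Q.tgt c → Q.src b = Q.tgt c' →
    ¬ Q.rel b c → ¬ Q.rel b c' → c = c'
  /-- for every arrow `b` there is at most one arrow `a` with `ab ∈ I` -/
  unique_rel_post : ∀ b a a', Q.rel a b → Q.rel a' b → a = a'
  /-- for every arrow `b` there is at most one arrow `c` with `bc ∈ I` -/
  unique_rel_pre : ∀ b c c', Q.rel b c → Q.rel b c' → c = c'
  /-- admissibility: there is `m ≥ 2` such that every path of length `m` contains a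
  length-two subpath lying in the relation set -/
  admissible : ∃ m, 2 ≤ m ∧ ∀ l : List A, l.length = m → Q.PathChain l →
    ¬ l.Chain' (fun a b => ¬ Q.rel a b)
  /-- the quiver is connected -/
  connected : ∀ u v : V, Relation.ReflTransGen
    (fun x y => ∃ a, (Q.src a = x ∧ Q.tgt a = y) ∨ (Q.src a = y ∧ Q.tgt a = x)) u v
  /-- the quiver has at least one arrow -/
  has_arrow : Nonempty A

/-- A path of the quiver `Q`, with a base (source) vertex so that trivial paths make
sense.  The arrows are written from right to left. -/
structure Path (Q : BQuiv V A) where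
  base : V
  arrows : List A
  chain : arrows.Chain' (fun a b => Q.src a = Q.tgt b)
  base_eq : ∀ a, arrows.getLast? = some a → Q.src a = base

variable {Q : BQuiv V A}

/-- The source vertex of a path. -/
def Path.srcV (p : Path Q) : V := p.base

/-- The target vertex of a path. -/
def Path.tgtV (p : Path Q) : V := p.arrows.head?.elim p.base Q.tgt

/-- The vertex of a path sitting between its first `n` arrows and the rest:
the center of the corresponding split of the path. -/
def Path.vertexAt (p : Path Q) (n : ℕ) : V :=
  (p.arrows.drop n).head?.elim p.base Q.tgt

/-- A path is permitted if none of its length-two subpaths is a relation. -/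
def Path.Permitted (p : Path Q) : Prop :=
  p.arrows.Chain' (fun a b => ¬ Q.rel a b)

/-- A path is forbidden if each of its length-two subpaths is a relation. -/
def Path.Forbidden (p : Path Q) : Prop :=
  p.arrows.Chain' (fun a b => Q.rel a b)

/-- Permitted threads: maximal non-trivial permitted paths, together with the trivial
paths `e_i` at vertices `i` with `deg i = 1`, or `deg i = 2` with the two arrows
`α, β` at `i` satisfying `src α = tgt β = i` and `αβ ∉ I`. -/
def IsPermThread (Q : BQuiv V A) (p : Path Q) : Prop :=
  (p.arrows ≠ [] ∧ p.Permitted ∧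
    (∀ a b, p.arrows.head? = some b → Q.src a = Q.tgt b → Q.rel a b) ∧
    (∀ a c, p.arrows.getLast? = some a → Q.src a = Q.tgt c → Q.rel a c)) ∨
  (p.arrows = [] ∧ (Q.deg p.base = 1 ∨ (Q.deg p.base = 2 ∧
    ∃ α β, Q.src α = p.base ∧ Q.tgt β = p.base ∧ ¬ Q.rel α β)))

/-- Forbidden threads: maximal non-trivial forbidden paths, together with the trivial
paths `e_i` at vertices `i` with `deg i = 1`, or `deg i = 2` with the two arrows
`α, β` at `i` satisfying `src α = tgt β = i` and `αβ ∈ I`. -/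
def IsForbThread (Q : BQuiv V A) (p : Path Q) : Prop :=
  (p.arrows ≠ [] ∧ p.Forbidden ∧
    (∀ a b, p.arrows.head? = some b → Q.src a = Q.tgt b → ¬ Q.rel a b) ∧
    (∀ a c, p.arrows.getLast? = some a → Q.src a = Q.tgt c → ¬ Q.rel a c)) ∨
  (p.arrows = [] ∧ (Q.deg p.base = 1 ∨ (Q.deg p.base = 2 ∧
    ∃ α β, Q.src α = p.base ∧ Q.tgt β = p.base ∧ Q.rel α β)))

end BQuiv

namespace BQuiv

variable {V A : Type}

/-- The type of permitted threads of `(Q, I)`: the vertices of the associated marked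
ribbon graph `△(Q, I)`. -/
def PThread (Q : BQuiv V A) : Type := {p : Path Q // IsPermThread Q p}

/-- The type of split permitted threads of `(Q, I)`: a permitted thread together with a
cut position.  These are the half-edges of the associated marked ribbon graph
`△(Q, I)`. -/
def PSplit (Q : BQuiv V A) : Type := {x : PThread Q × ℕ // x.2 ≤ x.1.1.arrows.length}

/-- The thread (vertex of `△(Q, I)`) over which a split permitted thread lies. -/
def PSplit.thread {Q : BQuiv V A} (x : PSplit Q) : PThread Q := x.1.1

/-- The cut position of a split permitted thread. -/
def PSplit.idx {Q : BQuiv V A} (x : PSplit Q) : ℕ := x.1.2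

/-- The center of a split permitted thread `(η″, η′)`: the vertex `s(η″) = t(η′)`.
The centers realize the bijection between the edges of `△(Q, I)` and the vertices
of `Q`. -/
def PSplit.center {Q : BQuiv V A} (x : PSplit Q) : V :=
  x.1.1.1.vertexAt x.1.2

end BQuiv

namespace BQuiv

variable {V A : Type}

/-- A letter of a walk of the quiver: an arrow `(a, true)` or a formal inverse
`(a, false)`. -/
abbrev Letter (A : Type) : Type := A × Bool

/-- The source vertex of a letter. -/
def lsrc (Q : BQuiv V A) (c : Letter A) : V := if c.2 then Q.src c.1 else Q.tgt c.1

/-- The target vertex of a letter. -/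
def ltgt (Q : BQuiv V A) (c : Letter A) : V := if c.2 then Q.tgt c.1 else Q.src c.1

/-- The inverse of a letter. -/
def linv (c : Letter A) : Letter A := (c.1, !c.2)

/-- `l` is (the list of letters of) a walk of the quiver, written from right to left. -/
def WalkChain (Q : BQuiv V A) (l : List (Letter A)) : Prop :=
  l.Chain' (fun c d => Q.lsrc c = Q.ltgt d)

/-- A walk is closed when its source equals its target. -/
def WalkClosed (Q : BQuiv V A) (l : List (Letter A)) : Prop :=
  ∀ c, l.head? = some c → ∀ d, l.getLast? = some d → Q.lsrc d = Q.ltgt c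

/-- A walk has no repeated edges when no arrow occurs twice (in either direction). -/
def NoRepeatedEdges (l : List (Letter A)) : Prop := (l.map Prod.fst).Nodup

/-- The number of relations of `R` contained in the closed walk `w = c₁⋯c_ℓ`: the
number of length-two subpaths of `w` or of `w⁻¹` lying in `R`, including the
wrap-around pairs `c_ℓc₁` and `c₁⁻¹c_ℓ⁻¹` when they consist of arrows and lie in `R`.
(Computed over the cyclically consecutive pairs of letters of `w`.) -/
noncomputable def relCount (Q : BQuiv V A) (l : List (Letter A)) : ℕ :=
  ((l.zip (l.rotate 1)).map (fun cd =>
    if (cd.1.2 = true ∧ cd.2.2 = true ∧ Q.rel cd.1.1 cd.2.1) ∨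
       (cd.1.2 = false ∧ cd.2.2 = false ∧ Q.rel cd.2.1 cd.1.1)
    then (1 : ℕ) else 0)).sum

/-- `(Q, I)` satisfies the multi-clock condition: every non-trivial closed walk of `Q`
without repeated edges contains an even number of relations. -/
def MultiClock (Q : BQuiv V A) : Prop :=
  ∀ l : List (Letter A), l ≠ [] → Q.WalkChain l → Q.WalkClosed l →
    NoRepeatedEdges l → Even (Q.relCount l)

end BQuiv

namespace BQuiv

variable {V A : Type}

/-- A pair of (Butler–Ringel) string functions for `(Q, I)`, with `Bool` standing for
`{±1}`. -/
def IsStringPair (Q : BQuiv V A) (S T : A → Bool) : Prop :=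
  (∀ a b, a ≠ b → Q.src a = Q.src b → S a ≠ S b) ∧
  (∀ a b, a ≠ b → Q.tgt a = Q.tgt b → T a ≠ T b) ∧
  (∀ a b, Q.tgt a = Q.src b → (Q.rel b a ↔ T a = S b))

end BQuiv

/-! ### Part 1: arrow colorings -/

namespace BQuiv

variable {V A : Type}

/-- `Bool` to `ZMod 2`. -/
def bz (b : Bool) : ZMod 2 := if b then 1 else 0

lemma zmod2_add_self (x : ZMod 2) : x + x = 0 := by
  revert x; decide

lemma sum_zip_add {B C : Type} (F : B → ZMod 2) (G : C → ZMod 2) :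
    ∀ (l : List B) (l' : List C), l.length = l'.length →
      ((l.zip l').map (fun cd => F cd.1 + G cd.2)).sum = (l.map F).sum + (l'.map G).sum
  | [], [], _ => by simp
  | [], _ :: _, h => by simp at h
  | _ :: _, [], h => by simp at h
  | b :: l, c :: l', h => by
    have := sum_zip_add F G l l' (by simpa using h)
    simp only [List.zip_cons_cons, List.map_cons, List.sum_cons, this]
    ring

/-- label at the source end of a letter -/
def lS (S T : A → Bool) (c : Letter A) : ZMod 2 := if c.2 then bz (S c.1) else bz (T c.1)
/-- label at the target end of a letter -/
def lT (S T : A → Bool) (c : Letter A) : ZMod 2 := if c.2 then bz (T c.1) else bz (S c.1)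

lemma mem_zip_rotate (Q : BQuiv V A) (l : List (Letter A))
    (h1 : Q.WalkChain l) (h2 : Q.WalkClosed l) (h3 : NoRepeatedEdges l)
    (c d : Letter A) (hcd : (c, d) ∈ l.zip (l.rotate 1)) :
    Q.lsrc c = Q.ltgt d ∧ (c.1 = d.1 → c = d) := by
  obtain ⟨i, hi, hE⟩ := List.mem_iff_getElem.1 hcd
  have hil : i < l.length := by simp at hi; exact hi
  rw [List.getElem_zip, List.getElem_rotate] at hE
  simp only [Prod.mk.injEq] at hE
  obtain ⟨hc, hd⟩ := hE
  constructor
  · by_cases hlt : i + 1 < l.length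
    · have hm : (i + 1) % l.length = i + 1 := Nat.mod_eq_of_lt hlt
      have := (List.isChain_iff_getElem.1 h1) i hlt
      simp only [hm] at hd
      rw [← hc, ← hd]; exact this
    · have hl : i + 1 = l.length := by omega
      have hm : (i + 1) % l.length = 0 := by rw [hl]; exact Nat.mod_self _
      simp only [hm] at hd
      refine h2 d ?_ c ?_
      · rw [List.head?_eq_getElem?, ← hd]
        exact List.getElem?_eq_getElem _
      · rw [List.getLast?_eq_getElem?, ← hc]
        have : l.length - 1 = i := by omega
        rw [this]
        exact List.getElem?_eq_getElem _
  · intro he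
    have hm : (i + 1) % l.length < l.length := Nat.mod_lt _ (by omega)
    have h4 : (l.map Prod.fst)[i]'(by simpa using hil) =
        (l.map Prod.fst)[(i + 1) % l.length]'(by simpa using hm) := by
      simp only [List.getElem_map]
      rw [hc, hd, he]
    have h5 := (List.Nodup.getElem_inj_iff h3).1 h4
    rw [← hc, ← hd]
    congr 1

lemma relCount_eq (Q : BQuiv V A) (S T : A → Bool) (hST : IsStringPair Q S T)
    (l : List (Letter A))
    (h1 : Q.WalkChain l) (h2 : Q.WalkClosed l) (h3 : NoRepeatedEdges l) :
    ((Q.relCount l : ℕ) : ZMod 2) = (l.map (fun c => bz (S c.1) + bz (T c.1) + 1)).sum := by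
  obtain ⟨hS, hT, hR⟩ := hST
  have e1 : ((Q.relCount l : ℕ) : ZMod 2) =
      ((l.zip (l.rotate 1)).map (fun cd => (lS S T cd.1 + 1) + lT S T cd.2)).sum := by
    unfold relCount
    rw [Nat.cast_list_sum, List.map_map]
    congr 1
    apply List.map_congr_left
    rintro ⟨c, d⟩ hcd
    obtain ⟨h4, h5⟩ := mem_zip_rotate Q l h1 h2 h3 c d hcd
    obtain ⟨a, x⟩ := c
    obtain ⟨b, y⟩ := d
    simp only [lsrc, ltgt, Prod.mk.injEq] at h4 h5
    simp only [Function.comp, lS, lT]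
    cases x <;> cases y <;> simp at h4 h5 ⊢
    · have := hR a b h4
      rw [this]
      cases T a <;> cases S b <;> simp [bz] <;> decide
    · have := hT a b h5 h4
      revert this
      cases T a <;> cases T b <;> simp [bz] <;> decide
    · have := hS a b h5 h4
      revert this
      cases S a <;> cases S b <;> simp [bz] <;> decide
    · have := hR b a h4.symm
      rw [this]
      cases T b <;> cases S a <;> simp [bz] <;> decide
  rw [e1, sum_zip_add (fun c => lS S T c + 1) (lT S T) l (l.rotate 1) (by simp)]
  have e2 : ((l.rotate 1).map (lT S T)).sum = (l.map (lT S T)).sum :=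
    ((List.rotate_perm l 1).map _).sum_eq
  rw [e2, ← List.sum_map_add]
  congr 1
  apply List.map_congr_left
  rintro ⟨a, x⟩ _
  cases x <;> simp [lS, lT] <;> ring

/-! ### Balance -/

/-- `l` is a walk from `u` to `v`, written from right to left. -/
def IsW (Q : BQuiv V A) : List (Letter A) → V → V → Prop
  | [], u, v => u = v
  | c :: l, u, v => Q.ltgt c = v ∧ IsW Q l u (Q.lsrc c)

lemma IsW.append {Q : BQuiv V A} {u v : V} : ∀ {l1 l2 : List (Letter A)},
    IsW Q (l1 ++ l2) u v → ∃ w, IsW Q l2 u w ∧ IsW Q l1 w v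
  | [], l2, h => ⟨v, h, rfl⟩
  | c :: l1, l2, h => by
    obtain ⟨w, h3, h4⟩ := IsW.append (l1 := l1) h.2
    exact ⟨w, h3, h.1, h4⟩

lemma IsW.head {Q : BQuiv V A} {u v : V} {l : List (Letter A)} (h : IsW Q l u v)
    (c : Letter A) (hc : l.head? = some c) : Q.ltgt c = v := by
  cases l with
  | nil => simp at hc
  | cons d l => simp at hc; subst hc; exact h.1

lemma IsW.last {Q : BQuiv V A} {u v : V} {l : List (Letter A)} (h : IsW Q l u v)
    (c : Letter A) (hc : l.getLast? = some c) : Q.lsrc c = u := by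
  obtain ⟨l', rfl⟩ := List.getLast?_eq_some_iff.1 hc
  obtain ⟨w, h1, h2⟩ := h.append
  exact h1.2.symm

lemma IsW.chain {Q : BQuiv V A} {u : V} : ∀ {l : List (Letter A)} {v : V}, IsW Q l u v →
    Q.WalkChain l
  | [], _, _ => List.IsChain.nil
  | c :: l, _, h => by
    refine List.isChain_cons.2 ⟨?_, IsW.chain h.2⟩
    intro d hd
    exact (h.2.head d hd).symm

lemma IsW.sum {Q : BQuiv V A} {E : Finset A} {σ : A → ZMod 2} {h : V → ZMod 2}
    (hh : ∀ a ∈ E, h (Q.src a) + h (Q.tgt a) = σ a) {u : V} :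
    ∀ {l : List (Letter A)} {v : V}, IsW Q l u v → (∀ c ∈ l, c.1 ∈ E) →
      (l.map (fun c => σ c.1)).sum = h u + h v
  | [], v, hw, _ => by
    cases hw
    simp [zmod2_add_self]
  | c :: l, v, hw, hE => by
    have := IsW.sum hh hw.2 (fun d hd => hE d (List.mem_cons_of_mem _ hd))
    rw [List.map_cons, List.sum_cons, this, ← hh c.1 (hE c (by simp)), ← hw.1]
    rcases c with ⟨a, x⟩
    cases x
    · simp only [lsrc, ltgt]
      simp
      linear_combination zmod2_add_self (h (Q.tgt a))
    · simp only [lsrc, ltgt]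
      simp
      linear_combination zmod2_add_self (h (Q.src a))

/-- reachability by a walk with no repeated edges inside `E` -/
def ReachE (Q : BQuiv V A) (E : Finset A) (u v : V) : Prop :=
  ∃ l, IsW Q l u v ∧ NoRepeatedEdges l ∧ ∀ c ∈ l, c.1 ∈ E

lemma ReachE.step {Q : BQuiv V A} {E : Finset A} {u : V} (c : Letter A) (hc : c.1 ∈ E)
    (h : ReachE Q E u (Q.lsrc c)) : ReachE Q E u (Q.ltgt c) := by
  obtain ⟨l, hw, hn, hE⟩ := h
  by_cases hm : c.1 ∈ l.map Prod.fst
  · obtain ⟨d, hd, hdc⟩ := List.mem_map.1 hm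
    obtain ⟨l1, l2, rfl⟩ := List.append_of_mem hd
    obtain ⟨w, h1, h2⟩ := hw.append
    have hn2 : NoRepeatedEdges (d :: l2) := by
      unfold NoRepeatedEdges at *
      rw [List.map_append] at hn
      exact (List.nodup_append.1 hn).2.1
    have hE2 : ∀ e ∈ d :: l2, e.1 ∈ E := fun e he => hE e (List.mem_append_right _ he)
    by_cases hx : d = c
    · subst hx
      refine ⟨d :: l2, ⟨rfl, h1.2⟩, hn2, hE2⟩
    · refine ⟨l2, ?_, ?_, fun e he => hE2 e (List.mem_cons_of_mem _ he)⟩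
      · have : Q.ltgt c = Q.lsrc d := by
          rcases c with ⟨a, x⟩
          rcases d with ⟨b, y⟩
          simp only at hdc
          subst hdc
          cases x <;> cases y <;> simp [lsrc, ltgt] at hx ⊢
        rw [this]
        exact h1.2
      · unfold NoRepeatedEdges at *
        rw [List.map_cons] at hn2
        exact (List.nodup_cons.1 hn2).2
  · refine ⟨c :: l, ⟨rfl, hw⟩, ?_, ?_⟩
    · unfold NoRepeatedEdges at *
      rw [List.map_cons]
      exact List.nodup_cons.2 ⟨hm, hn⟩
    · intro e he
      rcases List.mem_cons.1 he with rfl | he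
      · exact hc
      · exact hE e he

lemma balance (Q : BQuiv V A) (σ : A → ZMod 2)
    (hyp : ∀ l : List (Letter A), l ≠ [] → Q.WalkChain l → Q.WalkClosed l →
      NoRepeatedEdges l → (l.map (fun c => σ c.1)).sum = 0) (E : Finset A) :
    ∃ h : V → ZMod 2, ∀ a ∈ E, h (Q.src a) + h (Q.tgt a) = σ a := by
  induction E using Finset.induction_on with
  | empty => exact ⟨fun _ => 0, by simp⟩
  | insert a E ha ih =>
    obtain ⟨h, hh⟩ := ih
    by_cases hr : ReachE Q E (Q.tgt a) (Q.src a)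
    · refine ⟨h, ?_⟩
      intro b hb
      rcases Finset.mem_insert.1 hb with rfl | hb
      · obtain ⟨l, hw, hn, hE⟩ := hr
        have hs := hw.sum hh hE
        have hw2 : IsW Q ((b, true) :: l) (Q.tgt b) (Q.tgt b) := by
          refine ⟨by simp [ltgt], ?_⟩
          simpa [lsrc] using hw
        have h0 := hyp ((b, true) :: l) (by simp) hw2.chain
          (fun c hc d hd => by rw [hw2.head c hc, hw2.last d hd])
          (by
            unfold NoRepeatedEdges at *
            rw [List.map_cons]
            refine List.nodup_cons.2 ⟨?_, hn⟩
            intro hm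
            obtain ⟨d, hd, hdc⟩ := List.mem_map.1 hm
            have := hE d hd
            rw [hdc] at this
            exact ha this)
        rw [List.map_cons, List.sum_cons, hs] at h0
        linear_combination h0 - zmod2_add_self (σ b)
      · exact hh b hb
    · refine ⟨fun x => h x + if ReachE Q E (Q.tgt a) x then
        h (Q.src a) + h (Q.tgt a) + σ a else 0, ?_⟩
      intro b hb
      rcases Finset.mem_insert.1 hb with rfl | hb
      · have ht : ReachE Q E (Q.tgt b) (Q.tgt b) :=
          ⟨[], rfl, by simp [NoRepeatedEdges], by simp⟩
        simp only [hr, ht, if_true, if_false]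
        linear_combination zmod2_add_self (h (Q.src b)) + zmod2_add_self (h (Q.tgt b))
      · have hiff : ReachE Q E (Q.tgt a) (Q.src b) ↔ ReachE Q E (Q.tgt a) (Q.tgt b) := by
          constructor
          · intro hx
            have := ReachE.step (Q := Q) (u := Q.tgt a) (b, true) hb (by simpa [lsrc] using hx)
            simpa [ltgt] using this
          · intro hx
            have := ReachE.step (Q := Q) (u := Q.tgt a) (b, false) hb (by simpa [lsrc] using hx)
            simpa [ltgt] using this
        have h0 := hh b hb
        simp only [hiff]
        split_ifs
        · linear_combination h0 + zmod2_add_self (h (Q.src a) + h (Q.tgt a) + σ a)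
        · linear_combination h0

/-! ### Existence of string pairs -/

lemma three_card {A : Type} [Finite A] (P : A → Prop) (h : Nat.card {a : A // P a} ≤ 2)
    (a b c : A) (ha : P a) (hb : P b) (hc : P c) (hac : a ≠ c) (hbc : b ≠ c) : a = b := by
  by_contra hab
  have hinj : Function.Injective
      (fun i : Fin 3 => (![⟨a, ha⟩, ⟨b, hb⟩, ⟨c, hc⟩] i : {a : A // P a})) := by
    intro i j hij
    fin_cases i <;> fin_cases j <;> simp_all
  have := Nat.card_le_card_of_injective _ hinj
  simp at this
  omega

lemma exists_stringPair [Finite A] (Q : BQuiv V A) (hQ : Q.IsGentle) :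
    ∃ S T : A → Bool, IsStringPair Q S T := by
  have key : ∀ v : V, ∃ S T : A → Bool,
      (∀ a b, a ≠ b → Q.src a = v → Q.src b = v → S a ≠ S b) ∧
      (∀ a b, a ≠ b → Q.tgt a = v → Q.tgt b = v → T a ≠ T b) ∧
      (∀ a b, Q.tgt a = v → Q.src b = v → (Q.rel b a ↔ T a = S b)) := by
    intro v
    by_cases ho : ∃ b0, Q.src b0 = v
    · obtain ⟨b0, hb0⟩ := ho
      refine ⟨fun b => decide (b = b0), fun a => decide (Q.rel b0 a), ?_, ?_, ?_⟩
      · intro a b hab ha hb he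
        simp only [decide_eq_decide] at he
        by_cases h1 : a = b0
        · exact hab (h1.trans (he.1 h1).symm)
        · exact hab (three_card _ (hQ.out_le v) a b b0 ha hb hb0 h1 (fun h => h1 (he.2 h)))
      · intro a b hab ha hb he
        simp only [decide_eq_decide] at he
        by_cases h1 : Q.rel b0 a
        · exact hab (hQ.unique_rel_pre b0 a b h1 (he.1 h1))
        · exact hab (hQ.unique_nonrel_pre b0 a b (hb0.trans ha.symm) (hb0.trans hb.symm) h1
            (fun h => h1 (he.2 h)))
      · intro a b ha hb
        simp only [decide_eq_decide]
        by_cases h1 : b = b0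
        · subst h1; simp
        · simp only [h1, iff_false]
          constructor
          · intro h2 h3
            exact h1 (hQ.unique_rel_post a b b0 h2 h3)
          · intro h2
            by_contra h3
            exact h1 (hQ.unique_nonrel_post a b b0 (hb.trans ha.symm) (hb0.trans ha.symm) h3 h2)
    · by_cases hi : ∃ a0, Q.tgt a0 = v
      · obtain ⟨b0, hb0⟩ := hi
        refine ⟨fun _ => true, fun b => decide (b = b0), ?_, ?_, ?_⟩
        · intro a b _ ha
          exact absurd ⟨a, ha⟩ ho
        · intro a b hab ha hb he
          simp only [decide_eq_decide] at he
          by_cases h1 : a = b0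
          · exact hab (h1.trans (he.1 h1).symm)
          · exact hab (three_card _ (hQ.in_le v) a b b0 ha hb hb0 h1 (fun h => h1 (he.2 h)))
        · intro a b _ hb
          exact absurd ⟨b, hb⟩ ho
      · refine ⟨fun _ => true, fun _ => true, ?_, ?_, ?_⟩
        · intro a b _ ha
          exact absurd ⟨a, ha⟩ ho
        · intro a b _ ha
          exact absurd ⟨a, ha⟩ hi
        · intro a b _ hb
          exact absurd ⟨b, hb⟩ ho
  choose S T h1 h2 h3 using key
  refine ⟨fun a => S (Q.src a) a, fun a => T (Q.tgt a) a, ?_, ?_, ?_⟩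
  · intro a b hab he
    have := h1 (Q.src a) a b hab rfl he.symm
    simpa [he] using this
  · intro a b hab he
    have := h2 (Q.tgt a) a b hab rfl he.symm
    simpa [he] using this
  · intro a b he
    have := h3 (Q.tgt a) a b rfl he.symm
    simpa [he] using this

lemma multiClock_iff [Fintype A] (Q : BQuiv V A) (hQ : Q.IsGentle) :
    MultiClock Q ↔ ∃ S T : A → Bool, IsStringPair Q S T ∧ ∀ a, S a = !T a := by
  constructor
  · intro hM
    obtain ⟨S, T, hST⟩ := exists_stringPair Q hQ
    obtain ⟨h, hh⟩ := balance Q (fun a => bz (S a) + bz (T a) + 1) (by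
      intro l h0 h1 h2 h3
      rw [← relCount_eq Q S T hST l h1 h2 h3]
      exact (ZMod.natCast_eq_zero_iff_even).2 (hM l h0 h1 h2 h3)) Finset.univ
    obtain ⟨g, rfl⟩ : ∃ g : V → Bool, h = fun v => bz (g v) :=
      ⟨fun v => decide (h v = 1), by
        funext v
        have h01 : ∀ x : ZMod 2, x = 0 ∨ x = 1 := by decide
        rcases h01 (h v) with h0 | h0 <;> simp [bz, h0]⟩
    obtain ⟨hS, hT, hR⟩ := hST
    refine ⟨fun a => S a ^^ g (Q.src a), fun a => T a ^^ g (Q.tgt a), ⟨?_, ?_, ?_⟩, ?_⟩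
    · intro a b hab he
      have := hS a b hab he
      simp only [he]
      simpa using this
    · intro a b hab he
      have := hT a b hab he
      simp only [he]
      simpa using this
    · intro a b he
      rw [hR a b he]
      simp only [he]
      simp
    · intro a
      have := hh a (Finset.mem_univ a)
      revert this
      simp only
      generalize S a = p
      generalize T a = q
      generalize g (Q.src a) = r
      generalize g (Q.tgt a) = s
      revert p q r s
      decide
  · rintro ⟨S, T, hST, hneg⟩ l h0 h1 h2 h3
    rw [← ZMod.natCast_eq_zero_iff_even, relCount_eq Q S T hST l h1 h2 h3]
    apply List.sum_eq_zero
    intro x hx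
    obtain ⟨c, _, rfl⟩ := List.mem_map.1 hx
    rw [hneg]
    generalize T c.1 = q
    revert q
    decide

/-! ### Part 2: threads -/

/-- consecutive arrows of permitted paths -/
def PR (Q : BQuiv V A) (a b : A) : Prop := Q.src a = Q.tgt b ∧ ¬ Q.rel a b

/-- maximal chains -/
def MaxChain (R : A → A → Prop) (l : List A) : Prop :=
  l.IsChain R ∧ (∀ a b, l.head? = some b → ¬ R a b) ∧ (∀ a c, l.getLast? = some a → ¬ R a c)

lemma chain_unique (R : A → A → Prop) (hR : ∀ a b c, R a b → R a c → b = c) :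
    ∀ (l l' : List A) (a : A), (a :: l).IsChain R → (a :: l').IsChain R →
      (∀ b c, (a :: l).getLast? = some b → ¬ R b c) →
      (∀ b c, (a :: l').getLast? = some b → ¬ R b c) → l = l'
  | [], [], _, _, _, _, _ => rfl
  | [], b :: l', a, _, h2, h3, _ => by
    exact absurd (List.isChain_cons_cons.1 h2).1 (h3 a b rfl)
  | b :: l, [], a, h1, _, _, h4 => by
    exact absurd (List.isChain_cons_cons.1 h1).1 (h4 a b rfl)
  | b :: l, b' :: l', a, h1, h2, h3, h4 => by
    have h1' := List.isChain_cons_cons.1 h1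
    have h2' := List.isChain_cons_cons.1 h2
    have hb : b = b' := hR a b b' h1'.1 h2'.1
    subst hb
    have := chain_unique R hR l l' b h1'.2 h2'.2
      (fun x c hx => h3 x c (by simpa [List.getLast?_cons_cons] using hx))
      (fun x c hx => h4 x c (by simpa [List.getLast?_cons_cons] using hx))
    rw [this]

lemma maxChain_unique (R : A → A → Prop) (hR : ∀ a b c, R a b → R a c → b = c)
    (hR' : ∀ a b c, R b a → R c a → b = c) (l1 l2 l1' l2' : List A) (a : A)
    (h : MaxChain R (l1 ++ a :: l2)) (h' : MaxChain R (l1' ++ a :: l2')) :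
    l1 = l1' ∧ l2 = l2' := by
  constructor
  · have : l1.reverse = l1'.reverse := by
      refine chain_unique (fun x y => R y x) (fun x y z => hR' x y z) _ _ a ?_ ?_ ?_ ?_
      · have h1 : (l1 ++ [a]).IsChain R := by
          have := h.1
          rw [show l1 ++ a :: l2 = (l1 ++ [a]) ++ l2 by simp] at this
          exact (List.isChain_append.1 this).1
        rw [show a :: l1.reverse = (l1 ++ [a]).reverse by simp, List.isChain_reverse]
        exact h1
      · have h1 : (l1' ++ [a]).IsChain R := by
          have := h'.1
          rw [show l1' ++ a :: l2' = (l1' ++ [a]) ++ l2' by simp] at this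
          exact (List.isChain_append.1 this).1
        rw [show a :: l1'.reverse = (l1' ++ [a]).reverse by simp, List.isChain_reverse]
        exact h1
      · intro b c hb
        apply h.2.1 c b
        rw [show a :: l1.reverse = (l1 ++ [a]).reverse by simp, List.getLast?_reverse] at hb
        rw [← hb]
        cases l1 <;> simp
      · intro b c hb
        apply h'.2.1 c b
        rw [show a :: l1'.reverse = (l1' ++ [a]).reverse by simp, List.getLast?_reverse] at hb
        rw [← hb]
        cases l1' <;> simp
    exact List.reverse_injective this
  · refine chain_unique R hR _ _ a (List.isChain_append.1 h.1).2.1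
      (List.isChain_append.1 h'.1).2.1 ?_ ?_
    · intro b c hb
      exact h.2.2 b c (by rw [List.getLast?_append, hb]; rfl)
    · intro b c hb
      exact h'.2.2 b c (by rw [List.getLast?_append, hb]; rfl)

lemma isChain_PR {Q : BQuiv V A} {l : List A} :
    l.IsChain (PR Q) ↔ l.IsChain (fun a b => Q.src a = Q.tgt b) ∧
      l.IsChain (fun a b => ¬ Q.rel a b) := by
  simp only [List.isChain_iff_getElem, PR]
  constructor
  · intro h
    exact ⟨fun i hi => (h i hi).1, fun i hi => (h i hi).2⟩
  · rintro ⟨h1, h2⟩ i hi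
    exact ⟨h1 i hi, h2 i hi⟩

lemma PThread.maxChain {Q : BQuiv V A} (p : PThread Q) (hp : p.1.arrows ≠ []) :
    MaxChain (PR Q) p.1.arrows := by
  rcases p.2 with ⟨_, h1, h2, h3⟩ | ⟨h, _⟩
  · refine ⟨isChain_PR.2 ⟨p.1.chain, h1⟩, ?_, ?_⟩
    · intro a b hb hr
      exact hr.2 (h2 a b hb hr.1)
    · intro a c ha hr
      exact hr.2 (h3 a c ha hr.1)
  · exact absurd h hp

lemma PR_right {Q : BQuiv V A} (hQ : Q.IsGentle) (a b c : A) (h1 : PR Q a b) (h2 : PR Q a c) :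
    b = c := hQ.unique_nonrel_pre a b c h1.1 h2.1 h1.2 h2.2

lemma PR_left {Q : BQuiv V A} (hQ : Q.IsGentle) (a b c : A) (h1 : PR Q b a) (h2 : PR Q c a) :
    b = c := hQ.unique_nonrel_post a b c h1.1 h2.1 h1.2 h2.2

lemma PThread.ext_arrows {Q : BQuiv V A} (p q : PThread Q) (hp : p.1.arrows ≠ [])
    (h : p.1.arrows = q.1.arrows) : p = q := by
  obtain ⟨⟨pb, pa, pc, pe⟩, pt⟩ := p
  obtain ⟨⟨qb, qa, qc, qe⟩, qt⟩ := q
  simp only at h hp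
  subst h
  have := pe _ (List.getLast?_eq_some_getLast hp)
  have := qe _ (List.getLast?_eq_some_getLast hp)
  have hb : pb = qb := by rw [← pe _ (List.getLast?_eq_some_getLast hp), this]
  subst hb
  rfl

lemma PThread.unique {Q : BQuiv V A} (hQ : Q.IsGentle) (p q : PThread Q) (a : A)
    (l1 l2 l1' l2' : List A) (hp : p.1.arrows = l1 ++ a :: l2)
    (hq : q.1.arrows = l1' ++ a :: l2') : p = q ∧ l1 = l1' ∧ l2 = l2' := by
  have hp0 : p.1.arrows ≠ [] := by rw [hp]; simp
  have hq0 : q.1.arrows ≠ [] := by rw [hq]; simp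
  have h1 := p.maxChain hp0
  have h2 := q.maxChain hq0
  rw [hp] at h1
  rw [hq] at h2
  obtain ⟨e1, e2⟩ := maxChain_unique (PR Q) (PR_right hQ) (PR_left hQ) l1 l2 l1' l2' a h1 h2
  refine ⟨PThread.ext_arrows p q hp0 ?_, e1, e2⟩
  rw [hp, hq, e1, e2]

/-- Every arrow lies on a permitted thread. -/
lemma exists_thread {Q : BQuiv V A} (hQ : Q.IsGentle) (a : A) :
    ∃ (p : PThread Q) (l1 l2 : List A), p.1.arrows = l1 ++ a :: l2 := by
  obtain ⟨m, hm2, hm⟩ := hQ.admissible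
  have hbd : ∀ l : List A, l.IsChain (PR Q) → l.length ≤ m := by
    intro l hl
    by_contra hlt
    have h1 : (l.take m).IsChain (PR Q) := hl.take m
    rw [isChain_PR] at h1
    exact hm (l.take m) (by simp; omega) h1.1 h1.2
  let P : ℕ → Prop := fun n => ∃ l : List A, l.length = n ∧ l.IsChain (PR Q) ∧ a ∈ l
  have hP1 : P 1 := ⟨[a], rfl, List.isChain_singleton _, by simp⟩
  have hPm : ∀ n, P n → n ≤ m := by
    rintro n ⟨l, rfl, hl, _⟩
    exact hbd l hl
  obtain ⟨l, hlen, hl, hal⟩ := Nat.findGreatest_spec (P := P) (hPm 1 hP1) hP1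
  have hmax : ∀ l' : List A, l'.IsChain (PR Q) → a ∈ l' → l'.length ≤ l.length := by
    intro l' h1 h2
    rw [hlen]
    exact Nat.le_findGreatest (hbd l' h1) ⟨l', rfl, h1, h2⟩
  have hne : l ≠ [] := by rintro rfl; simp at hal
  have hl' := isChain_PR.1 hl
  obtain ⟨l1, l2, hl12⟩ := List.append_of_mem hal
  refine ⟨⟨⟨Q.src (l.getLast hne), l, hl'.1, ?_⟩, Or.inl ⟨hne, hl'.2, ?_, ?_⟩⟩, l1, l2, hl12⟩
  · intro b hb
    rw [List.getLast?_eq_some_getLast hne] at hb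
    cases hb
    rfl
  · intro x b hb hx
    by_contra hr
    have := hmax (x :: l) (List.isChain_cons.2 ⟨by
      intro y hy
      change l.head? = some b at hb
      rw [Option.mem_def, hb] at hy
      cases hy
      exact ⟨hx, hr⟩, hl⟩) (List.mem_cons_of_mem _ hal)
    simp at this
  · intro b x hb hx
    by_contra hr
    have := hmax (l ++ [x]) (List.isChain_append.2 ⟨hl, List.isChain_singleton _, by
      intro y hy z hz
      change l.getLast? = some b at hb
      rw [Option.mem_def, hb] at hy
      cases hy
      simp at hz
      cases hz
      exact ⟨hx, hr⟩⟩) (List.mem_append_left _ hal)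
    simp at this

/-- Split from a decomposition. -/
def mkSplit {Q : BQuiv V A} (p : PThread Q) (l1 l2 : List A) (h : p.1.arrows = l1 ++ l2) :
    PSplit Q := ⟨(p, l1.length), by simp [h]⟩

lemma mkSplit_center_in {Q : BQuiv V A} (p : PThread Q) (l1 l2 : List A) (a : A)
    (h : p.1.arrows = l1 ++ a :: l2) : (mkSplit p l1 (a :: l2) h).center = Q.tgt a := by
  simp [mkSplit, PSplit.center, Path.vertexAt, h]

lemma mkSplit_center_out {Q : BQuiv V A} (p : PThread Q) (l1 l2 : List A) (b : A)
    (h : p.1.arrows = (l1 ++ [b]) ++ l2) :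
    (mkSplit p (l1 ++ [b]) l2 h).center = Q.src b := by
  have e : (mkSplit p (l1 ++ [b]) l2 h).center = l2.head?.elim p.1.base Q.tgt := by
    simp only [mkSplit, PSplit.center, Path.vertexAt, h]
    rw [List.drop_left]
  rw [e]
  cases l2 with
  | nil =>
    simp only [List.head?_nil, Option.elim_none]
    exact (p.1.base_eq b (by rw [h]; simp)).symm
  | cons a l2 =>
    have hc := p.1.chain
    rw [h] at hc
    have := (List.isChain_append.1 hc).2.2 b (by simp) a (by simp)
    simpa using this.symm

lemma exists_mkSplit {Q : BQuiv V A} (x : PSplit Q) : ∃ (l1 l2 : List A)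
    (h : x.thread.1.arrows = l1 ++ l2), x = mkSplit x.thread l1 l2 h := by
  obtain ⟨⟨p, n⟩, hn⟩ := x
  refine ⟨p.1.arrows.take n, p.1.arrows.drop n, (List.take_append_drop _ _).symm, ?_⟩
  apply Subtype.ext
  simp only at hn
  simp [mkSplit, PSplit.thread, hn]

lemma mkSplit_inj {Q : BQuiv V A} {p q : PThread Q} {l1 l2 l1' l2' : List A}
    {h : p.1.arrows = l1 ++ l2} {h' : q.1.arrows = l1' ++ l2'}
    (he : mkSplit p l1 l2 h = mkSplit q l1' l2' h') : p = q ∧ l1 = l1' ∧ l2 = l2' := by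
  have h1 := congrArg Subtype.val he
  simp only [mkSplit, Prod.mk.injEq] at h1
  obtain ⟨rfl, h2⟩ := h1
  exact ⟨rfl, List.append_inj (h.symm.trans h') h2⟩

/-- colorings of arrows equivalent to string pairs with `S = -T` -/
def IsArrowCol (Q : BQuiv V A) (f : A → Bool) : Prop :=
  (∀ a b, a ≠ b → Q.src a = Q.src b → f a ≠ f b) ∧
  (∀ a b, a ≠ b → Q.tgt a = Q.tgt b → f a ≠ f b) ∧
  (∀ a b, Q.tgt a = Q.src b → (Q.rel b a ↔ f a ≠ f b))

lemma stringPair_iff (Q : BQuiv V A) :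
    (∃ S T : A → Bool, IsStringPair Q S T ∧ ∀ a, S a = !T a) ↔ ∃ f, IsArrowCol Q f := by
  constructor
  · rintro ⟨S, T, ⟨h1, h2, h3⟩, h4⟩
    refine ⟨T, ?_, h2, ?_⟩
    · intro a b hab he
      have := h1 a b hab he
      simpa [h4] using this
    · intro a b he
      rw [h3 a b he, h4]
      cases T a <;> cases T b <;> simp
  · rintro ⟨T, h1, h2, h3⟩
    refine ⟨fun a => !T a, T, ⟨?_, h2, ?_⟩, fun _ => rfl⟩
    · intro a b hab he
      have := h1 a b hab he
      simpa using this
    · intro a b he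
      rw [h3 a b he]
      change _ ↔ T a = !T b
      cases T a <;> cases T b <;> simp

lemma arrowCol_of_bip (Q : BQuiv V A) (hQ : Q.IsGentle) (c : PThread Q → Bool)
    (hc : ∀ x y : PSplit Q, x ≠ y → x.center = y.center → c x.thread ≠ c y.thread) :
    ∃ f, IsArrowCol Q f := by
  choose p l1 l2 hp using fun a => exists_thread hQ a
  have hp' : ∀ a, (p a).1.arrows = (l1 a ++ [a]) ++ l2 a := fun a => by rw [hp a]; simp
  refine ⟨fun a => c (p a), ?_, ?_, ?_⟩
  · intro a b hab he
    refine hc (mkSplit (p a) _ _ (hp' a)) (mkSplit (p b) _ _ (hp' b)) ?_ ?_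
    · intro h
      obtain ⟨_, h2, _⟩ := mkSplit_inj h
      exact hab (by simpa using (List.append_inj' h2 rfl).2)
    · rw [mkSplit_center_out, mkSplit_center_out, he]
  · intro a b hab he
    refine hc (mkSplit (p a) _ _ (hp a)) (mkSplit (p b) _ _ (hp b)) ?_ ?_
    · intro h
      obtain ⟨_, _, h2⟩ := mkSplit_inj h
      exact hab (List.cons.inj h2).1
    · rw [mkSplit_center_in, mkSplit_center_in, he]
  · intro a b he
    constructor
    · intro hr
      refine hc (mkSplit (p a) _ _ (hp a)) (mkSplit (p b) _ _ (hp' b)) ?_ ?_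
      · intro h
        obtain ⟨h0, h1, h2⟩ := mkSplit_inj h
        have hm := (p a).maxChain (by rw [hp a]; simp)
        have hm1 := hm.1
        rw [hp a, h1] at hm1
        exact ((List.isChain_append.1 hm1).2.2 b (by simp) a (by simp)).2 hr
      · rw [mkSplit_center_in, mkSplit_center_out, he]
    · intro hne
      by_contra hr
      apply hne
      have hm := (p a).maxChain (by rw [hp a]; simp)
      rcases List.eq_nil_or_concat (l1 a) with h0 | ⟨l, b', h0⟩
      · exact absurd (⟨he.symm, hr⟩ : PR Q b a) (hm.2.1 b a (by rw [hp a, h0]; simp))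
      · have hm1 := hm.1
        rw [hp a, h0] at hm1
        have hb' := (List.isChain_append.1 hm1).2.2 b' (by simp) a (by simp)
        have : b' = b := PR_left hQ a b' b hb' ⟨he.symm, hr⟩
        subst this
        have hx : (p a).1.arrows = l ++ b' :: (a :: l2 a) := by rw [hp a, h0]; simp
        have := (PThread.unique hQ (p a) (p b') b' _ _ _ _ hx (hp b')).1
        simp only [this]

lemma trivial_const [Finite A] (Q : BQuiv V A) (f : A → Bool) (hf : IsArrowCol Q f) (v : V)
    (hv : Q.deg v = 1 ∨ (Q.deg v = 2 ∧ ∃ α β, Q.src α = v ∧ Q.tgt β = v ∧ ¬ Q.rel α β))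
    (a b : A) (ha : Q.src a = v ∨ Q.tgt a = v) (hb : Q.src b = v ∨ Q.tgt b = v) :
    f a = f b := by
  have hpos1 : ∀ x, Q.src x = v → 0 < Nat.card {a : A // Q.src a = v} := fun x hx => by
    haveI : Nonempty {a : A // Q.src a = v} := ⟨⟨x, hx⟩⟩
    exact Nat.card_pos
  have hpos2 : ∀ x, Q.tgt x = v → 0 < Nat.card {a : A // Q.tgt a = v} := fun x hx => by
    haveI : Nonempty {a : A // Q.tgt a = v} := ⟨⟨x, hx⟩⟩
    exact Nat.card_pos
  have hs1 : Nat.card {a : A // Q.src a = v} ≤ 1 → ∀ x y, Q.src x = v → Q.src y = v → x = y := by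
    intro h x y hx hy
    haveI := Finite.card_le_one_iff_subsingleton.1 h
    exact congrArg Subtype.val (Subsingleton.elim (⟨x, hx⟩ : {a : A // Q.src a = v}) ⟨y, hy⟩)
  have hs2 : Nat.card {a : A // Q.tgt a = v} ≤ 1 → ∀ x y, Q.tgt x = v → Q.tgt y = v → x = y := by
    intro h x y hx hy
    haveI := Finite.card_le_one_iff_subsingleton.1 h
    exact congrArg Subtype.val (Subsingleton.elim (⟨x, hx⟩ : {a : A // Q.tgt a = v}) ⟨y, hy⟩)
  unfold deg at hv
  rcases hv with hv | ⟨hv, α, β, hα, hβ, hr⟩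
  · have hs1 := hs1 (by omega)
    have hs2 := hs2 (by omega)
    rcases ha with ha | ha <;> rcases hb with hb | hb
    · rw [hs1 a b ha hb]
    · have := hpos1 a ha
      have := hpos2 b hb
      omega
    · have := hpos1 b hb
      have := hpos2 a ha
      omega
    · rw [hs2 a b ha hb]
  · have h1 := hpos1 α hα
    have h2 := hpos2 β hβ
    have hs1 := hs1 (by omega)
    have hs2 := hs2 (by omega)
    have hαβ : f β = f α := by
      by_contra h
      exact hr ((hf.2.2 β α (hβ.trans hα.symm)).2 h)
    have key : ∀ x, (Q.src x = v ∨ Q.tgt x = v) → f x = f α := by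
      rintro x (hx | hx)
      · rw [hs1 x α hx hα]
      · rw [hs2 x β hx hβ, hαβ]
    rw [key a ha, key b hb]

/-- the color of a thread -/
noncomputable def thCol (Q : BQuiv V A) (f : A → Bool) (p : PThread Q) : Bool :=
  match p.1.arrows with
  | [] => !decide (∃ a, (Q.src a = p.1.base ∨ Q.tgt a = p.1.base) ∧ f a = true)
  | a :: _ => f a

lemma chain_const {Q : BQuiv V A} {f : A → Bool} (hf : IsArrowCol Q f) :
    ∀ (l : List A) (a : A), (a :: l).IsChain (PR Q) → ∀ b ∈ a :: l, f b = f a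
  | [], a, _, b, hb => by simp at hb; rw [hb]
  | x :: l, a, h, b, hb => by
    have h' := List.isChain_cons_cons.1 h
    have hx : f x = f a := by
      by_contra hne
      exact h'.1.2 ((hf.2.2 x a h'.1.1.symm).2 hne)
    rcases List.mem_cons.1 hb with rfl | hb
    · rfl
    · rw [chain_const hf l x h'.2 b hb, hx]

lemma thCol_mem {Q : BQuiv V A} {f : A → Bool} (hf : IsArrowCol Q f) (p : PThread Q)
    (b : A) (hb : b ∈ p.1.arrows) : thCol Q f p = f b := by
  have hm := (p.maxChain (List.ne_nil_of_mem hb)).1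
  unfold thCol
  split
  · rename_i h; rw [h] at hb; simp at hb
  · rename_i a l h
    rw [h] at hm hb
    exact (chain_const hf l a hm b hb).symm

lemma thCol_trivial [Finite A] {Q : BQuiv V A} {f : A → Bool} (hf : IsArrowCol Q f)
    (p : PThread Q) (hp : p.1.arrows = []) (b : A)
    (hb : Q.src b = p.1.base ∨ Q.tgt b = p.1.base) : thCol Q f p = !f b := by
  have ht : Q.deg p.1.base = 1 ∨ (Q.deg p.1.base = 2 ∧
      ∃ α β, Q.src α = p.1.base ∧ Q.tgt β = p.1.base ∧ ¬ Q.rel α β) := by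
    rcases p.2 with h | h
    · exact absurd hp h.1
    · exact h.2
  have hk := fun a ha => trivial_const Q f hf _ ht a b ha hb
  have e : thCol Q f p =
      !decide (∃ a, (Q.src a = p.1.base ∨ Q.tgt a = p.1.base) ∧ f a = true) := by
    unfold thCol
    split
    · rfl
    · rename_i h; rw [hp] at h; simp at h
  rw [e]
  congr 1
  by_cases h : f b = true
  · rw [h]
    exact decide_eq_true ⟨b, hb, h⟩
  · have h' : f b = false := by simpa using h
    rw [h']
    refine decide_eq_false ?_
    rintro ⟨a, ha, hfa⟩
    rw [hk a ha] at hfa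
    exact h hfa

/-- A split of a thread: trivial, or with an incoming arrow at the center, or with only
an outgoing one. -/
lemma split_cases {Q : BQuiv V A} (x : PSplit Q) :
    (x.thread.1.arrows = [] ∧ x.thread.1.base = x.center ∧ x.idx = 0) ∨
    (∃ a l1 l2, ∃ h : x.thread.1.arrows = l1 ++ a :: l2, x = mkSplit x.thread l1 (a :: l2) h ∧
      Q.tgt a = x.center ∧
      (l1 = [] ∨ ∃ b l, l1 = l ++ [b] ∧ Q.src b = x.center)) ∨
    (∃ b l, ∃ h : x.thread.1.arrows = (l ++ [b]) ++ [],
      x = mkSplit x.thread (l ++ [b]) [] h ∧ Q.src b = x.center) := by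
  obtain ⟨l1, l2, h, hx⟩ := exists_mkSplit x
  have hcen : x.center = (mkSplit x.thread l1 l2 h).center := congrArg _ hx
  cases l2 with
  | nil =>
    rcases List.eq_nil_or_concat l1 with h0 | ⟨l, b, h0⟩
    · left
      subst h0
      refine ⟨by simpa using h, ?_, ?_⟩
      · rw [hcen]
        simp [mkSplit, PSplit.center, Path.vertexAt, h]
      · rw [hx]; rfl
    · right; right
      rw [List.concat_eq_append] at h0
      subst h0
      refine ⟨b, l, h, hx, ?_⟩
      rw [hcen, mkSplit_center_out]
  | cons a l2 =>
    right; left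
    refine ⟨a, l1, l2, h, hx, ?_, ?_⟩
    · rw [hcen, mkSplit_center_in]
    · rcases List.eq_nil_or_concat l1 with h0 | ⟨l, b, h0⟩
      · exact Or.inl h0
      · right
        rw [List.concat_eq_append] at h0
        subst h0
        exact ⟨b, l, rfl, by rw [hcen, mkSplit_center_out]⟩

lemma mkSplit_congr {Q : BQuiv V A} {p q : PThread Q} {l1 l2 l1' l2' : List A}
    (h : p.1.arrows = l1 ++ l2) (h' : q.1.arrows = l1' ++ l2')
    (e : p = q) (e1 : l1 = l1') : mkSplit p l1 l2 h = mkSplit q l1' l2' h' := by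
  subst e; subst e1; rfl

lemma split_eq_in {Q : BQuiv V A} (hQ : Q.IsGentle) {p q : PThread Q} {l1 l2 l1' l2' : List A}
    {a : A} (h : p.1.arrows = l1 ++ a :: l2) (h' : q.1.arrows = l1' ++ a :: l2') :
    mkSplit p l1 (a :: l2) h = mkSplit q l1' (a :: l2') h' := by
  obtain ⟨e, e1, _⟩ := PThread.unique hQ p q a _ _ _ _ h h'
  exact mkSplit_congr h h' e e1

lemma split_eq_out {Q : BQuiv V A} (hQ : Q.IsGentle) {p q : PThread Q}
    {l1 l2 l1' l2' : List A}
    {a : A} (h : p.1.arrows = (l1 ++ [a]) ++ l2) (h' : q.1.arrows = (l1' ++ [a]) ++ l2') :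
    mkSplit p (l1 ++ [a]) l2 h = mkSplit q (l1' ++ [a]) l2' h' := by
  obtain ⟨e, e1, _⟩ := PThread.unique hQ p q a l1 l2 l1' l2' (by simpa using h) (by simpa using h')
  exact mkSplit_congr h h' e (by rw [e1])

/-- incoming versus outgoing-only -/
lemma bip_in_out {Q : BQuiv V A} (hQ : Q.IsGentle) {f : A → Bool} (hf : IsArrowCol Q f)
    {p q : PThread Q} {a b : A} {l1 l2 l : List A}
    (h : p.1.arrows = l1 ++ a :: l2) (h' : q.1.arrows = (l ++ [b]) ++ [])
    (hv : Q.tgt a = Q.src b)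
    (hne : mkSplit p l1 (a :: l2) h ≠ mkSplit q (l ++ [b]) [] h') :
    thCol Q f p ≠ thCol Q f q := by
  rw [thCol_mem hf p a (by rw [h]; simp), thCol_mem hf q b (by rw [h']; simp)]
  by_contra he
  have hr : ¬ Q.rel b a := fun hr => (hf.2.2 a b hv).1 hr he
  have hm := q.maxChain (by rw [h']; simp)
  exact hm.2.2 b a (by rw [h']; simp) ⟨hv.symm, hr⟩

lemma bip_of_arrowCol [Finite A] (Q : BQuiv V A) (hQ : Q.IsGentle) (f : A → Bool)
    (hf : IsArrowCol Q f) (x y : PSplit Q) (hxy : x ≠ y) (hc : x.center = y.center) :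
    thCol Q f x.thread ≠ thCol Q f y.thread := by
  have triv : ∀ (x y : PSplit Q), x.center = y.center → x.thread.1.arrows = [] →
      x.thread.1.base = x.center → ∀ b ∈ y.thread.1.arrows,
      (Q.src b = y.center ∨ Q.tgt b = y.center) →
      thCol Q f x.thread ≠ thCol Q f y.thread := by
    intro x y hc hx hb b hby hbc
    rw [thCol_mem hf _ b hby, thCol_trivial hf _ hx b (by rw [hb, hc]; exact hbc)]
    simp
  rcases split_cases x with ⟨hx, hxb, hxi⟩ | ⟨a, l1, l2, hx, hxe, hxa, -⟩ | ⟨b, l, hx, hxe, hxb⟩ <;>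
  rcases split_cases y with ⟨hy, hyb, hyi⟩ | ⟨a', l1', l2', hy, hye, hya, -⟩ |
    ⟨b', l', hy, hye, hyb⟩
  · exfalso
    apply hxy
    obtain ⟨⟨⟨⟨pb, pa, pc, pe⟩, pt⟩, n⟩, hn⟩ := x
    obtain ⟨⟨⟨⟨qb, qa, qc, qe⟩, qt⟩, m⟩, hm⟩ := y
    have e := hxb.trans (hc.trans hyb.symm)
    simp only [PSplit.thread, PSplit.idx] at hx hy hxi hyi e
    subst hx hy hxi hyi e
    rfl
  · exact triv x y hc hx hxb a' (by rw [hy]; simp) (Or.inr hya)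
  · exact triv x y hc hx hxb b' (by rw [hy]; simp) (Or.inl hyb)
  · exact (triv y x hc.symm hy hyb a (by rw [hx]; simp) (Or.inr hxa)).symm
  · rw [thCol_mem hf _ a (by rw [hx]; simp), thCol_mem hf _ a' (by rw [hy]; simp)]
    refine hf.2.1 a a' ?_ (by rw [hxa, hya, hc])
    rintro rfl
    exact hxy (hxe.trans ((split_eq_in hQ hx hy).trans hye.symm))
  · exact bip_in_out hQ hf hx hy (by rw [hxa, hyb, hc]) (by rw [← hxe, ← hye]; exact hxy)
  · exact (triv y x hc.symm hy hyb b (by rw [hx]; simp) (Or.inl hxb)).symm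
  · exact (bip_in_out hQ hf hy hx (by rw [hxb, hya, hc])
      (by rw [← hxe, ← hye]; exact hxy.symm)).symm
  · rw [thCol_mem hf _ b (by rw [hx]; simp), thCol_mem hf _ b' (by rw [hy]; simp)]
    refine hf.1 b b' ?_ (by rw [hxb, hyb, hc])
    rintro rfl
    exact hxy (hxe.trans ((split_eq_out hQ hx hy).trans hye.symm))

end BQuiv

open BQuiv

/-- Let `(Q, I)` be a gentle bound quiver with marked ribbon graph
`(G, ≤) = △(Q, I)`.  The following are equivalent: (1) `(Q, I)` satisfies the
multi-clock condition; (2) there is a pair of string functions `S, T` with `S ≡ -T`;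
(3) the underlying graph of `G` is bipartite, i.e. there is a `2`-coloring of the
permitted threads such that the two endpoints of every edge of `G` (the two split
permitted threads with a common center) lie over threads of different colors. -/
theorem stmt10 {V A : Type} [Fintype V] [Fintype A] (Q : BQuiv V A) (hQ : Q.IsGentle) :
    (MultiClock Q ↔
      ∃ S T : A → Bool, IsStringPair Q S T ∧ ∀ a, S a = !T a) ∧
    (MultiClock Q ↔
      ∃ c : PThread Q → Bool, ∀ x y : PSplit Q, x ≠ y → x.center = y.center →
        c x.thread ≠ c y.thread) := by
  refine ⟨multiClock_iff Q hQ, ?_⟩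
  rw [multiClock_iff Q hQ, stringPair_iff]
  constructor
  · rintro ⟨f, hf⟩
    exact ⟨thCol Q f, fun x y => bip_of_arrowCol Q hQ f hf x y⟩
  · rintro ⟨c, hc⟩
    exact arrowCol_of_bip Q hQ c hc
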